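/- For every i ∈ {0,1,…,d}, the ℂ-linear span of {A_0, A_1, …, A_i} is closed under matrix multiplication, i.e., for all g, h ∈ {0,…,i} the product A_g A_h is a ℂ-linear combination of A_0, A_1, …, A_i. (Equivalently, {R_0, R_1, …, R_i} is a closed subset and ⟨A_0,…,A_i⟩ is a Bose-Mesner subalgebra of the Bose-Mesner algebra of the wreath product.) -/

import Mathlib

open Finset Matrix

/-- Vertex set of the wreath product `K_{n 0} ≀ K_{n 1} ≀ ⋯ ≀ K_{n (d-1)}`
(paper indices `n_1, …, n_d` correspond to `n 0, …, n (d-1)`). -/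
abbrev Vx (d : ℕ) (n : ℕ → ℕ) : Type := (i : Fin d) → Fin (n i)

/-- `delta x y = 0` if `x = y`; otherwise `delta x y` is the largest (1-based)
index at which `x` and `y` differ. -/
def delta {d : ℕ} {n : ℕ → ℕ} (x y : Vx d n) : ℕ :=
  (Finset.univ.filter fun i => x i ≠ y i).sup fun i => (i : ℕ) + 1

/-- The `i`-th adjacency matrix of the wreath product: `(A i) x y = 1` iff `delta x y = i`. -/
noncomputable def A (d : ℕ) (n : ℕ → ℕ) (i : ℕ) : Matrix (Vx d n) (Vx d n) ℂ :=
  Matrix.of fun x y => if delta x y = i then 1 else 0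

/-- The valencies: `k 0 = 1` and, for `1 ≤ i`, `k i = n_1 ⋯ n_{i-1} (n_i - 1)`,
i.e. `k i = n 0 ⋯ n (i-2) * (n (i-1) - 1)`. -/
def k (n : ℕ → ℕ) (i : ℕ) : ℕ :=
  if i = 0 then 1 else (∏ j ∈ Finset.range (i - 1), n j) * (n (i - 1) - 1)

/-- The dual idempotent `E_i*` with respect to the base point `x₀`: the diagonal
0-1 matrix with `(E_i*)_{yy} = 1` iff `delta x₀ y = i`. -/
noncomputable def Es {d : ℕ} {n : ℕ → ℕ} (x₀ : Vx d n) (i : ℕ) :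
    Matrix (Vx d n) (Vx d n) ℂ :=
  Matrix.of fun y z => if y = z ∧ delta x₀ y = i then 1 else 0

/-- The all-ones matrix `J`. -/
noncomputable def Jm (d : ℕ) (n : ℕ → ℕ) : Matrix (Vx d n) (Vx d n) ℂ :=
  Matrix.of fun _ _ => 1

/-- The matrices `G i j`. -/
noncomputable def G {d : ℕ} {n : ℕ → ℕ} (x₀ : Vx d n) (i j : ℕ) :
    Matrix (Vx d n) (Vx d n) ℂ :=
  if i < j then ((k n j : ℂ))⁻¹ • (Es x₀ i * A d n j * Es x₀ j)
  else if j < i then ((k n j : ℂ))⁻¹ • (Es x₀ i * A d n i * Es x₀ j)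
  else ((k n i : ℂ))⁻¹ • (Es x₀ i * Jm d n * Es x₀ i)

/-- The span `U` of the matrices `G i j`, `i, j ∈ [d]`. -/
noncomputable def Uspan {d : ℕ} {n : ℕ → ℕ} (x₀ : Vx d n) :
    Submodule ℂ (Matrix (Vx d n) (Vx d n) ℂ) :=
  Submodule.span ℂ (Set.range fun p : Fin (d + 1) × Fin (d + 1) => G x₀ p.1 p.2)

/-- The Terwilliger algebra of the wreath product with respect to `x₀`. -/
noncomputable def Ter {d : ℕ} {n : ℕ → ℕ} (x₀ : Vx d n) :
    Subalgebra ℂ (Matrix (Vx d n) (Vx d n) ℂ) :=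
  Algebra.adjoin ℂ
    ((Set.range fun i : Fin (d + 1) => A d n i) ∪ (Set.range fun i : Fin (d + 1) => Es x₀ i))

/-- The matrices `F i h`, for `1 ≤ i ≤ d` and `0 ≤ h ≤ i - 1`. -/
noncomputable def F {d : ℕ} {n : ℕ → ℕ} (x₀ : Vx d n) (i h : ℕ) :
    Matrix (Vx d n) (Vx d n) ℂ :=
  if h < i - 1 then
    (∑ j ∈ Finset.range (h + 1), (k n j : ℂ))⁻¹ •
        (∑ j ∈ Finset.range (h + 1), Es x₀ i * A d n j * Es x₀ i)
      - (∑ j ∈ Finset.range (h + 2), (k n j : ℂ))⁻¹ •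
          (∑ j ∈ Finset.range (h + 2), Es x₀ i * A d n j * Es x₀ i)
  else
    (∑ j ∈ Finset.range i, (k n j : ℂ))⁻¹ •
        (∑ j ∈ Finset.range i, Es x₀ i * A d n j * Es x₀ i)
      - G x₀ i i

/-!
The function `delta` is an ultrametric, so for each `g` the relation `delta x y ≤ g` is an
equivalence relation; let `B g` be its 0-1 matrix. Its classes all have the same size, and the
relations grow with `g`, whence `B g * B h` is a scalar multiple of `B (max g h)`. Finally
`B g = A 0 + ⋯ + A g`, so `B 0, …, B i` and `A 0, …, A i` have the same span.
-/

section Span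

variable {R M : Type*}

lemma span_image_sum_range_succ [Ring R] [AddCommGroup M] [Module R M] (a : ℕ → M) (m : ℕ) :
    Submodule.span R ((fun j => ∑ l ∈ range (j + 1), a l) '' Set.Iio m) =
      Submodule.span R (a '' Set.Iio m) := by
  apply le_antisymm <;> rw [Submodule.span_le] <;> rintro _ ⟨j, hj : j < m, rfl⟩
  · exact Submodule.sum_mem _ fun l hl =>
      Submodule.subset_span ⟨l, (mem_range_succ_iff.1 hl).trans_lt hj, rfl⟩
  · cases j with
    | zero => exact Submodule.subset_span ⟨0, hj, by simp⟩
    | succ j =>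
      have a_succ : a (j + 1) = ∑ l ∈ range (j + 2), a l - ∑ l ∈ range (j + 1), a l := by
        rw [sum_range_succ _ (j + 1), add_sub_cancel_left]
      rw [a_succ]
      exact Submodule.sub_mem _ (Submodule.subset_span ⟨j + 1, hj, rfl⟩)
        (Submodule.subset_span ⟨j, j.lt_succ_self.trans hj, rfl⟩)

lemma mul_mem_span_image_Iio {ι : Type*} [LinearOrder ι] [CommSemiring R] [Semiring M]
    [Algebra R M] {b : ι → M} (mul_mem : ∀ p q, b p * b q ∈ Submodule.span R {b (max p q)})
    {m : ι} {u v : M} (hu : u ∈ Submodule.span R (b '' Set.Iio m))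
    (hv : v ∈ Submodule.span R (b '' Set.Iio m)) :
    u * v ∈ Submodule.span R (b '' Set.Iio m) := by
  have huv := Submodule.mul_mem_mul hu hv
  rw [Submodule.span_mul_span] at huv
  refine Submodule.span_le.2 ?_ huv
  rintro _ ⟨_, ⟨p, hp, rfl⟩, _, ⟨q, hq, rfl⟩, rfl⟩
  have max_mem : b (max p q) ∈ b '' Set.Iio m := ⟨_, max_lt hp hq, rfl⟩
  exact Submodule.span_mono (Set.singleton_subset_iff.2 max_mem) (mul_mem p q)

end Span

section SetoidMatrix

variable {α : Type*} (R : Type*)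

/-- The 0-1 matrix of an equivalence relation; up to reordering the index set, it is block diagonal
with an all-ones block for each equivalence class. -/
def setoidMatrix [Zero R] [One R] (r : Setoid α) [DecidableRel r] : Matrix α α R :=
  of fun x y => if r x y then 1 else 0

lemma transpose_setoidMatrix [Zero R] [One R] (r : Setoid α) [DecidableRel r] :
    (setoidMatrix R r)ᵀ = setoidMatrix R r := by
  ext x y
  simp only [setoidMatrix, transpose_apply, of_apply, r.comm']

lemma setoidMatrix_mul_of_le [Semiring R] [Fintype α] {r s : Setoid α} [DecidableRel r]
    [DecidableRel s] (hrs : r ≤ s) {c : ℕ} (card_class : ∀ x, #{z | r x z} = c) :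
    setoidMatrix R r * setoidMatrix R s = (c : R) • setoidMatrix R s := by
  ext x y
  calc (setoidMatrix R r * setoidMatrix R s) x y
      = ∑ z with r x z, setoidMatrix R s z y := by
        simp only [mul_apply, setoidMatrix, of_apply, ite_mul, one_mul, zero_mul, sum_filter]
    _ = ∑ z with r x z, setoidMatrix R s x y := by
        refine sum_congr rfl fun z hz => ?_
        have hxz : s x z := hrs (mem_filter.1 hz).2
        have same_class : s z y ↔ s x y := ⟨s.trans' hxz, s.trans' (s.symm' hxz)⟩
        simp only [setoidMatrix, of_apply, same_class]
    _ = ((c : R) • setoidMatrix R s) x y := by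
        rw [sum_const, card_class, nsmul_eq_mul, Matrix.smul_apply, smul_eq_mul]

lemma setoidMatrix_mul_of_ge [CommSemiring R] [Fintype α] {r s : Setoid α} [DecidableRel r]
    [DecidableRel s] (hsr : s ≤ r) {c : ℕ} (card_class : ∀ x, #{z | s x z} = c) :
    setoidMatrix R r * setoidMatrix R s = (c : R) • setoidMatrix R r := by
  have transposed := congrArg transpose (setoidMatrix_mul_of_le R hsr card_class)
  simpa only [transpose_mul, transpose_smul, transpose_setoidMatrix] using transposed

lemma setoidMatrix_mul_mem_span_max [CommSemiring R] [Fintype α] {ι : Type*} [LinearOrder ι]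
    {r : ι → Setoid α} [∀ p, DecidableRel (r p)] (hr : Monotone r) {c : ι → ℕ}
    (card_class : ∀ p x, #{z | r p x z} = c p) (p q : ι) :
    setoidMatrix R (r p) * setoidMatrix R (r q) ∈
      Submodule.span R {setoidMatrix R (r (max p q))} := by
  rw [Submodule.mem_span_singleton]
  rcases le_total p q with hpq | hqp
  · exact ⟨c p, by rw [max_eq_right hpq, setoidMatrix_mul_of_le R (hr hpq) (card_class p)]⟩
  · exact ⟨c q, by rw [max_eq_left hqp, setoidMatrix_mul_of_ge R (hr hqp) (card_class q)]⟩

end SetoidMatrix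

section Delta

variable {d : ℕ} {n : ℕ → ℕ}

lemma delta_le_iff {x y : Vx d n} {g : ℕ} :
    delta x y ≤ g ↔ ∀ j : Fin d, g ≤ j → x j = y j := by
  simp only [delta, Finset.sup_le_iff, mem_filter_univ, Nat.succ_le_iff]
  exact forall_congr' fun j => by rw [← not_le, ne_eq, not_imp_not]

variable (d n)

/-- The equivalence relation `delta x y ≤ g`, whose classes are the closed balls of radius `g` of
the ultrametric `delta`; it is the union of the first `g + 1` relations of the scheme. -/
def deltaSetoid (g : ℕ) : Setoid (Vx d n) where
  r x y := delta x y ≤ g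
  iseqv :=
    { refl _ := delta_le_iff.2 fun _ _ => rfl
      symm hxy := delta_le_iff.2 fun j hj => (delta_le_iff.1 hxy j hj).symm
      trans hxy hyz := delta_le_iff.2 fun j hj =>
        (delta_le_iff.1 hxy j hj).trans (delta_le_iff.1 hyz j hj) }

instance (g : ℕ) : DecidableRel (deltaSetoid d n g) :=
  fun x y => inferInstanceAs (Decidable (delta x y ≤ g))

lemma deltaSetoid_mono : Monotone (deltaSetoid d n) :=
  fun _ _ hgh _ _ hxy => le_trans hxy hgh

lemma card_deltaSetoid_class (g : ℕ) (x : Vx d n) :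
    #{z | deltaSetoid d n g x z} = ∏ j : Fin d, if g ≤ j then 1 else n j := by
  have class_eq_box : ({z | deltaSetoid d n g x z} : Finset (Vx d n)) =
      Fintype.piFinset fun j : Fin d => if g ≤ j then {x j} else univ := by
    ext z
    rw [mem_filter_univ, Fintype.mem_piFinset]
    refine delta_le_iff.trans (forall_congr' fun j => ?_)
    split_ifs with hj <;> simp [hj, eq_comm]
  rw [class_eq_box, Fintype.card_piFinset]
  exact prod_congr rfl fun j _ => by split_ifs <;> simp

lemma setoidMatrix_deltaSetoid (g : ℕ) :
    setoidMatrix ℂ (deltaSetoid d n g) = ∑ j ∈ range (g + 1), A d n j := by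
  ext x y
  have rel_iff : deltaSetoid d n g x y ↔ delta x y < g + 1 := Nat.lt_succ_iff.symm
  simp [setoidMatrix, A, Matrix.sum_apply, rel_iff]

lemma A_mul_mem_span_image_Iio {m g h : ℕ} (hg : g < m) (hh : h < m) :
    A d n g * A d n h ∈ Submodule.span ℂ (A d n '' Set.Iio m) := by
  let B (j : ℕ) : Matrix (Vx d n) (Vx d n) ℂ := setoidMatrix ℂ (deltaSetoid d n j)
  have B_mul_mem (p q : ℕ) : B p * B q ∈ Submodule.span ℂ {B (max p q)} :=
    setoidMatrix_mul_mem_span_max ℂ (deltaSetoid_mono d n) (card_deltaSetoid_class d n) p q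
  have span_B : Submodule.span ℂ (B '' Set.Iio m) = Submodule.span ℂ (A d n '' Set.Iio m) := by
    rw [← span_image_sum_range_succ (A d n), ← funext (setoidMatrix_deltaSetoid d n)]
  have A_mem {j : ℕ} (hj : j < m) : A d n j ∈ Submodule.span ℂ (B '' Set.Iio m) :=
    span_B ▸ Submodule.subset_span (Set.mem_image_of_mem _ hj)
  rw [← span_B]
  exact mul_mem_span_image_Iio B_mul_mem (A_mem hg) (A_mem hh)

end Delta

/-- for every `i ∈ [d]`, the span of `A 0, …, A i` is closed under
multiplication: `A g * A h` is a linear combination of `A 0, …, A i` for `g, h ≤ i`. -/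
theorem stmt3 (d : ℕ) (hd : 1 ≤ d) (n : ℕ → ℕ) (hn : ∀ i < d, 2 ≤ n i)
    (i : ℕ) (hi : i ≤ d) (g h : ℕ) (hg : g ≤ i) (hh : h ≤ i) :
    A d n g * A d n h ∈
      Submodule.span ℂ (Set.range fun j : Fin (i + 1) => A d n (j : ℕ)) := by
  have range_eq : (Set.range fun j : Fin (i + 1) => A d n j) = A d n '' Set.Iio (i + 1) := by
    rw [← Fin.range_val, ← Set.range_comp, Function.comp_def]
  rw [range_eq]
  exact A_mul_mem_span_image_Iio d n (Nat.lt_succ_of_le hg) (Nat.lt_succ_of_le hh)
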